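/- arXiv:1604.05439 — 4 statements merged into one kernel-verified Lean document; each statement's English description precedes it below -/
import Mathlib

section
/- Let E be a graph with finitely many vertices, let η ⊆ Γ_E be a hereditary subset of the component poset, and let v be a regular vertex of E such that there is no path from v to any vertex of any component in Γ_E \ η. Then v belongs to the saturation of H(∪η), the smallest hereditary subset of E⁰ containing the union of the components in η. -/
attribute [local instance] Classical.propDecidable

/-- A directed graph: a set of vertices, a set of edges, and source/range maps. -/
structure DirGraph : Type 1 where
  V : Type
  E : Type
  s : E → V
  r : E → V

namespace DirGraph

variable (G : DirGraph)

/-- A vertex is regular if it emits a finite nonzero number of edges. -/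
def Regular (v : G.V) : Prop :=
  {e : G.E | G.s e = v}.Finite ∧ {e : G.E | G.s e = v}.Nonempty

/-- A vertex is a sink if it emits no edges. -/
def IsSink (v : G.V) : Prop := ∀ e : G.E, G.s e ≠ v

/-- A vertex is an infinite emitter if it emits infinitely many edges. -/
def InfiniteEmitter (v : G.V) : Prop := {e : G.E | G.s e = v}.Infinite

/-- One-step reachability: there is an edge from `u` to `v`. -/
def Step (u v : G.V) : Prop := ∃ e : G.E, G.s e = u ∧ G.r e = v

/-- `Reach u v` means there is a (possibly empty) path from `u` to `v`, i.e. `u ≥ v`. -/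
def Reach : G.V → G.V → Prop := Relation.ReflTransGen G.Step

/-- A vertex supports a cycle if there is a nonempty path from it to itself. -/
def SupportsCycle (v : G.V) : Prop := Relation.TransGen G.Step v v

/-- A transition state is a regular vertex which does not support a cycle. -/
def TransitionState (v : G.V) : Prop := G.Regular v ∧ ¬ G.SupportsCycle v

/-- A set of vertices is hereditary if it is closed under reachability. -/
def Hereditary (H : Set G.V) : Prop := ∀ u v : G.V, u ∈ H → G.Reach u v → v ∈ H

/-- A set of vertices is saturated if it contains every regular vertex all of whose
emitted edges end in the set. -/
def Saturated (S : Set G.V) : Prop :=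
  ∀ v : G.V, G.Regular v → (∀ e : G.E, G.s e = v → G.r e ∈ S) → v ∈ S

/-- `H(S)`: the smallest hereditary set containing `S`. -/
def heredClosure (S : Set G.V) : Set G.V := ⋂₀ {H : Set G.V | G.Hereditary H ∧ S ⊆ H}

/-- The saturation of `S`: the smallest saturated set containing `S`. -/
def saturate (S : Set G.V) : Set G.V := ⋂₀ {T : Set G.V | G.Saturated T ∧ S ⊆ T}

/-- A nonempty set is strongly connected if any two of its vertices are joined by
a nonempty path. -/
def StronglyConn (S : Set G.V) : Prop :=
  S.Nonempty ∧ ∀ u ∈ S, ∀ v ∈ S, Relation.TransGen G.Step u v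

/-- The components of `G` (elements of `Γ_E`): maximal strongly connected subsets together
with singletons of singular vertices not supporting a cycle. -/
def IsComponent (γ : Set G.V) : Prop :=
  (G.StronglyConn γ ∧ ∀ δ : Set G.V, G.StronglyConn δ → γ ⊆ δ → δ = γ) ∨
  (∃ v : G.V, γ = {v} ∧ ¬ G.Regular v ∧ ¬ G.SupportsCycle v)

/-- The order on components: `γ ≥ δ` iff some vertex of `γ` reaches some vertex of `δ`. -/
def CompGE (γ δ : Set G.V) : Prop := ∃ u ∈ γ, ∃ w ∈ δ, G.Reach u w

/-- `η` is a hereditary set of components. -/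
def HeredComp (η : Set (Set G.V)) : Prop :=
  (∀ γ ∈ η, G.IsComponent γ) ∧
  ∀ γ δ : Set G.V, γ ∈ η → G.IsComponent δ → G.CompGE γ δ → δ ∈ η

/-- A list of edges is a path if consecutive edges are composable. -/
def IsPathChain (p : List G.E) : Prop := List.Chain' (fun e f => G.r e = G.s f) p

/-- `p` is a return path based at `v`: a nonempty path from `v` to `v` not revisiting `v`
before the final edge. -/
def IsReturnPath (v : G.V) (p : List G.E) : Prop :=
  ∃ h : p ≠ [], G.IsPathChain p ∧ G.s (p.head h) = v ∧ G.r (p.getLast h) = v ∧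
    ∀ e ∈ p.dropLast, G.r e ≠ v

/-- `v` supports (at least) two distinct return paths. -/
def TwoReturnPaths (v : G.V) : Prop :=
  ∃ p q : List G.E, G.IsReturnPath v p ∧ G.IsReturnPath v q ∧ p ≠ q

/-- `v` supports a unique return path. -/
def UniqueReturnPath (v : G.V) : Prop := ∃! p : List G.E, G.IsReturnPath v p

/-- A component is cyclic if each of its vertices supports exactly one return path. -/
def CyclicComponent (γ : Set G.V) : Prop :=
  G.IsComponent γ ∧ ∀ v ∈ γ, G.UniqueReturnPath v

/-- Condition (K): every vertex supports either no return path or at least two. -/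
def ConditionK : Prop :=
  ∀ v : G.V, (¬ ∃ p : List G.E, G.IsReturnPath v p) ∨ G.TwoReturnPaths v

/-- The cycle (or path) `p` has an exit. -/
def HasExit (p : List G.E) : Prop := ∃ f e : G.E, e ∈ p ∧ G.s f = G.s e ∧ f ≠ e

/-- `p` is a nonempty path from `v` to `w`. -/
def IsPathFromTo (v w : G.V) (p : List G.E) : Prop :=
  ∃ h : p ≠ [], G.IsPathChain p ∧ G.s (p.head h) = v ∧ G.r (p.getLast h) = w

/-- Condition (H). -/
def ConditionH : Prop :=
  ∀ v : G.V, G.Regular v → G.UniqueReturnPath v →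
    (∀ p : List G.E, G.IsReturnPath v p → ¬ G.HasExit p) ∨
    ∃ w : G.V, w ≠ v ∧ (¬ G.Regular w ∨ G.UniqueReturnPath w) ∧
      (∃ p : List G.E, G.IsPathFromTo v w p) ∧
      ∀ p : List G.E, G.IsPathFromTo v w p → ∀ e ∈ p,
        ¬ G.TwoReturnPaths (G.s e) ∧ ¬ G.TwoReturnPaths (G.r e)

/-- The temperature `τ_E(γ) = sgn(|γ¹| − |γ|)` of a set of vertices, with the conventions
`sgn(0) = 0` and `sgn(∞) = 1`. -/
noncomputable def temp (γ : Set G.V) : ℤ :=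
  if {e : G.E | G.s e ∈ γ ∧ G.r e ∈ γ}.Infinite then 1
  else Int.sign ((Nat.card {e : G.E | G.s e ∈ γ ∧ G.r e ∈ γ} : ℤ) - (Nat.card γ : ℤ))

end DirGraph

/-! A vertex in no component is a transition state: it is regular, and no edge it emits leads to a
vertex with a path back. So moving along edges while at transition states cannot go on forever in a
graph with finitely many vertices, and by induction along these steps a saturated set contains a
vertex as soon as it contains every component vertex reachable from it. -/

namespace DirGraph

variable {G : DirGraph}

theorem subset_heredClosure (S : Set G.V) : S ⊆ G.heredClosure S :=
  Set.subset_sInter fun _ hH => hH.2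

theorem subset_saturate (S : Set G.V) : S ⊆ G.saturate S :=
  Set.subset_sInter fun _ hT => hT.2

theorem saturated_saturate (S : Set G.V) : G.Saturated (G.saturate S) :=
  fun v hv he T hT => hT.1 v hv fun e hs => he e hs T hT

/-- The strongly connected component of `u`: the vertices that share a cycle with `u`. It is empty
when `u` supports no cycle. -/
def strongComponent (u : G.V) : Set G.V :=
  {w | Relation.TransGen G.Step u w ∧ Relation.TransGen G.Step w u}

theorem SupportsCycle.mem_strongComponent {u : G.V} (hu : G.SupportsCycle u) :
    u ∈ strongComponent u :=
  ⟨hu, hu⟩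

theorem SupportsCycle.stronglyConn_strongComponent {u : G.V} (hu : G.SupportsCycle u) :
    G.StronglyConn (strongComponent u) :=
  ⟨⟨u, hu.mem_strongComponent⟩, fun _ ha _ hb => ha.2.trans hb.1⟩

theorem StronglyConn.subset_strongComponent {δ : Set G.V} (hδ : G.StronglyConn δ) {u : G.V}
    (hu : u ∈ δ) : δ ⊆ strongComponent u :=
  fun w hw => ⟨hδ.2 u hu w hw, hδ.2 w hw u hu⟩

theorem SupportsCycle.isComponent_strongComponent {u : G.V} (hu : G.SupportsCycle u) :
    G.IsComponent (strongComponent u) :=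
  .inl ⟨hu.stronglyConn_strongComponent, fun _ hδ hsub =>
    (hδ.subset_strongComponent (hsub hu.mem_strongComponent)).antisymm hsub⟩

theorem exists_isComponent_mem_of_not_transitionState {u : G.V} (hu : ¬ G.TransitionState u) :
    ∃ γ : Set G.V, G.IsComponent γ ∧ u ∈ γ := by
  by_cases hcycle : G.SupportsCycle u
  · exact ⟨strongComponent u, hcycle.isComponent_strongComponent, hcycle.mem_strongComponent⟩
  · have hsingular : ¬ G.Regular u := fun hreg => hu ⟨hreg, hcycle⟩
    exact ⟨{u}, .inr ⟨u, rfl, hsingular, hcycle⟩, rfl⟩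

/-- One step along an edge emitted by a transition state, with the range of the edge as the first
argument: accessibility of `v` for this relation means that no infinite path starting at `v`
consists of transition states only. -/
def TransitionStep (w u : G.V) : Prop := G.TransitionState u ∧ G.Step u w

theorem wellFounded_transitionStep [Finite G.V] : WellFounded (@TransitionStep G) := by
  let acyclicReach (w u : G.V) : Prop := ¬ G.SupportsCycle u ∧ Relation.TransGen G.Step u w
  have : IsTrans G.V acyclicReach := ⟨fun _ _ _ hab hbc => ⟨hbc.1, hbc.2.trans hab.2⟩⟩
  have : Std.Irrefl acyclicReach := ⟨fun _ ha => ha.1 ha.2⟩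
  have hsub : Subrelation (@TransitionStep G) acyclicReach := fun h => ⟨h.1.2, .single h.2⟩
  exact hsub.wf (Finite.wellFounded_of_trans_of_irrefl acyclicReach)

theorem Saturated.mem_of_forall_isComponent {T : Set G.V} (hT : G.Saturated T) {v : G.V}
    (hacc : Acc TransitionStep v)
    (hcomp : ∀ γ : Set G.V, G.IsComponent γ → ∀ w ∈ γ, G.Reach v w → w ∈ T) : v ∈ T := by
  induction hacc with
  | intro u _ ih =>
    by_cases hu : G.TransitionState u
    · refine hT u hu.1 fun e he => ?_
      have hstep : G.Step u (G.r e) := ⟨e, he, rfl⟩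
      exact ih (G.r e) ⟨hu, hstep⟩ fun γ hγ w hw hreach => hcomp γ hγ w hw (.head hstep hreach)
    · obtain ⟨γ, hγ, huγ⟩ := exists_isComponent_mem_of_not_transitionState hu
      exact hcomp γ hγ u huγ .refl

end DirGraph

open DirGraph in
theorem stmt0_general (G : DirGraph) (η : Set (Set G.V)) (v : G.V)
    (hacc : Acc TransitionStep v)
    (hnopath : ∀ γ : Set G.V, G.IsComponent γ → γ ∉ η → ∀ w ∈ γ, ¬ G.Reach v w) :
    v ∈ G.saturate (G.heredClosure (⋃₀ η)) := by
  refine (saturated_saturate _).mem_of_forall_isComponent hacc fun γ hγ w hw hreach => ?_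
  have hγη : γ ∈ η := by_contra fun hγη => hnopath γ hγ hγη w hw hreach
  exact subset_saturate _ (subset_heredClosure _ ⟨γ, hγη, hw⟩)

open DirGraph in
/-- Lemma 3.11 / `lem:structure-a`: if `η ⊆ Γ_E` is hereditary and the
regular vertex `v` has no path to any vertex of any component outside `η`, then `v`
lies in the saturation of `H(∪η)`. -/
theorem stmt0 (G : DirGraph) (hcE : Countable G.E) (hfin : Finite G.V)
    (η : Set (Set G.V)) (hη : G.HeredComp η)
    (v : G.V) (hreg : G.Regular v)
    (hnopath : ∀ γ : Set G.V, G.IsComponent γ → γ ∉ η → ∀ w ∈ γ, ¬ G.Reach v w) :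
    v ∈ G.saturate (G.heredClosure (⋃₀ η)) :=
  stmt0_general G η v (wellFounded_transitionStep.apply v) hnopath
end

section
/- Let E be a graph with finitely many vertices that has no transition states. Then every hereditary subset of E⁰ is saturated, and the map η ↦ ∪η is a lattice isomorphism from the hereditary subsets of Γ_E onto the saturated hereditary subsets of E⁰. -/
attribute [local instance] Classical.propDecidable

/-!
Every component is a class of mutual reachability: it is the class of each of its vertices, and the
class of a vertex that is not a transition state is a component. Without transition states the
components therefore partition the vertices, so a hereditary set, which contains the whole class of
each of its vertices, is the union of the components inside it, while a set of components is
recovered from its union. Saturation is automatic: a regular vertex lies on a cycle, so if all its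
out-neighbours lie in a hereditary set, following the cycle returns to the vertex inside that set.
-/

namespace DirGraph

variable {G : DirGraph} {v : G.V} {H γ δ : Set G.V} {η : Set (Set G.V)}

/-- The class of `v` under mutual reachability. Empty paths count, so it always contains `v` and is
strongly connected only if `v` supports a cycle. -/
def reachClass (G : DirGraph) (v : G.V) : Set G.V := {w | AntisymmRel G.Reach v w}

theorem mem_reachClass_self (v : G.V) : v ∈ G.reachClass v :=
  ⟨Relation.ReflTransGen.refl, Relation.ReflTransGen.refl⟩

theorem reachClass_eq_singleton (hv : ¬ G.SupportsCycle v) : G.reachClass v = {v} := by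
  refine Set.Subset.antisymm ?_ (Set.singleton_subset_iff.mpr (mem_reachClass_self v))
  rintro w ⟨hvw, hwv⟩
  rcases Relation.reflTransGen_iff_eq_or_transGen.mp hvw with heq | hvw_path
  · exact heq
  · exact absurd (hvw_path.trans_left hwv) hv

theorem SupportsCycle.stronglyConn_reachClass (hv : G.SupportsCycle v) :
    G.StronglyConn (G.reachClass v) :=
  ⟨⟨v, mem_reachClass_self v⟩, fun _ hu _ hw => (hv.trans_right hu.2).trans_left hw.1⟩

theorem StronglyConn.subset_reachClass (hγ : G.StronglyConn γ) (hv : v ∈ γ) :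
    γ ⊆ G.reachClass v :=
  fun w hw => ⟨(hγ.2 v hv w hw).to_reflTransGen, (hγ.2 w hw v hv).to_reflTransGen⟩

theorem isComponent_reachClass (hv : ¬ G.TransitionState v) : G.IsComponent (G.reachClass v) := by
  by_cases hcycle : G.SupportsCycle v
  · exact Or.inl ⟨hcycle.stronglyConn_reachClass, fun δ hδ hsub =>
      (hδ.subset_reachClass (hsub (mem_reachClass_self v))).antisymm hsub⟩
  · exact Or.inr ⟨v, reachClass_eq_singleton hcycle, fun hreg => hv ⟨hreg, hcycle⟩, hcycle⟩

theorem IsComponent.nonempty (hγ : G.IsComponent γ) : γ.Nonempty := by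
  rcases hγ with ⟨hconn, -⟩ | ⟨v, rfl, -⟩
  · exact hconn.1
  · exact Set.singleton_nonempty v

theorem IsComponent.eq_reachClass (hγ : G.IsComponent γ) (hv : v ∈ γ) : γ = G.reachClass v := by
  rcases hγ with ⟨hconn, hmax⟩ | ⟨w, rfl, -, hcycle⟩
  · have hcycle : G.SupportsCycle v := hconn.2 v hv v hv
    exact (hmax _ hcycle.stronglyConn_reachClass (hconn.subset_reachClass hv)).symm
  · obtain rfl : v = w := hv
    exact (reachClass_eq_singleton hcycle).symm

theorem IsComponent.eq_of_mem (hγ : G.IsComponent γ) (hδ : G.IsComponent δ) (hvγ : v ∈ γ)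
    (hvδ : v ∈ δ) : γ = δ :=
  (hγ.eq_reachClass hvγ).trans (hδ.eq_reachClass hvδ).symm

theorem Hereditary.reachClass_subset (hH : G.Hereditary H) (hv : v ∈ H) : G.reachClass v ⊆ H :=
  fun w hw => hH v w hv hw.1

theorem Hereditary.mem_of_supportsCycle (hH : G.Hereditary H) (hv : G.SupportsCycle v)
    (hout : ∀ e : G.E, G.s e = v → G.r e ∈ H) : v ∈ H := by
  obtain ⟨_, ⟨e, hs, rfl⟩, hback⟩ := Relation.TransGen.head'_iff.mp hv
  exact hH (G.r e) v (hout e hs) hback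

theorem Hereditary.saturated (hH : G.Hereditary H) (hnt : ∀ v : G.V, ¬ G.TransitionState v) :
    G.Saturated H := by
  intro v hreg hout
  have hcycle : G.SupportsCycle v := of_not_not fun hc => hnt v ⟨hreg, hc⟩
  exact hH.mem_of_supportsCycle hcycle hout

/-- The components of `G` contained in `H`. On the hereditary sets of a graph without transition
states this is the inverse of `η ↦ ⋃₀ η`. -/
def componentsIn (G : DirGraph) (H : Set G.V) : Set (Set G.V) := {γ | G.IsComponent γ ∧ γ ⊆ H}

theorem componentsIn_mono : Monotone G.componentsIn :=
  fun _ _ hsub _ hγ => ⟨hγ.1, hγ.2.trans hsub⟩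

theorem componentsIn_sUnion (hη : ∀ γ ∈ η, G.IsComponent γ) : G.componentsIn (⋃₀ η) = η := by
  refine Set.Subset.antisymm ?_ fun γ hγ => ⟨hη γ hγ, Set.subset_sUnion_of_mem hγ⟩
  rintro γ ⟨hγ, hsub⟩
  obtain ⟨v, hvγ⟩ := hγ.nonempty
  obtain ⟨δ, hδ, hvδ⟩ := hsub hvγ
  rwa [hγ.eq_of_mem (hη δ hδ) hvγ hvδ]

theorem Hereditary.heredComp_componentsIn (hH : G.Hereditary H) :
    G.HeredComp (G.componentsIn H) := by
  refine ⟨fun _ hγ => hγ.1, ?_⟩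
  rintro γ δ ⟨-, hγH⟩ hδ ⟨u, hu, w, hw, huw⟩
  refine ⟨hδ, ?_⟩
  rw [hδ.eq_reachClass hw]
  exact hH.reachClass_subset (hH u w (hγH hu) huw)

theorem Hereditary.sUnion_componentsIn (hH : G.Hereditary H)
    (hnt : ∀ v : G.V, ¬ G.TransitionState v) : ⋃₀ G.componentsIn H = H := by
  refine Set.Subset.antisymm (Set.sUnion_subset fun _ hγ => hγ.2) fun v hv => ?_
  exact ⟨G.reachClass v, ⟨isComponent_reachClass (hnt v), hH.reachClass_subset hv⟩,
    mem_reachClass_self v⟩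

theorem HeredComp.hereditary_sUnion (hη : G.HeredComp η)
    (hnt : ∀ v : G.V, ¬ G.TransitionState v) : G.Hereditary (⋃₀ η) := by
  rintro u v ⟨γ, hγ, hu⟩ huv
  have hge : G.CompGE γ (G.reachClass v) := ⟨u, hu, v, mem_reachClass_self v, huv⟩
  exact ⟨G.reachClass v, hη.2 γ _ hγ (isComponent_reachClass (hnt v)) hge, mem_reachClass_self v⟩

/-- The map `η ↦ ⋃₀ η` as an order isomorphism from the hereditary subsets of `Γ_E` onto the
saturated hereditary subsets of `E⁰`; being an order isomorphism of lattices, it preserves joins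
and meets. -/
def sUnionOrderIso (hnt : ∀ v : G.V, ¬ G.TransitionState v) :
    {η : Set (Set G.V) // G.HeredComp η} ≃o {H : Set G.V // G.Hereditary H ∧ G.Saturated H} :=
  Equiv.toOrderIso
    { toFun := fun η => ⟨⋃₀ η.1, η.2.hereditary_sUnion hnt,
        (η.2.hereditary_sUnion hnt).saturated hnt⟩
      invFun := fun H => ⟨G.componentsIn H.1, H.2.1.heredComp_componentsIn⟩
      left_inv := fun η => Subtype.ext (componentsIn_sUnion η.2.1)
      right_inv := fun H => Subtype.ext (H.2.1.sUnion_componentsIn hnt) }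
    (fun _ _ hsub => Set.sUnion_subset_sUnion hsub)
    (fun _ _ hsub => componentsIn_mono hsub)

end DirGraph

open DirGraph in
theorem stmt2_general (G : DirGraph) (hnt : ∀ v : G.V, ¬ G.TransitionState v) :
    (∀ H : Set G.V, G.Hereditary H → G.Saturated H) ∧
    (∀ η₁ η₂ : Set (Set G.V), G.HeredComp η₁ → G.HeredComp η₂ →
      (η₁ ⊆ η₂ ↔ ⋃₀ η₁ ⊆ ⋃₀ η₂)) ∧
    (∀ η : Set (Set G.V), G.HeredComp η →
      G.Hereditary (⋃₀ η) ∧ G.Saturated (⋃₀ η)) ∧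
    (∀ H : Set G.V, G.Hereditary H → G.Saturated H →
      ∃! η : Set (Set G.V), G.HeredComp η ∧ ⋃₀ η = H) := by
  refine ⟨fun H hH => hH.saturated hnt, fun η₁ η₂ h₁ h₂ => ?_, fun η hη => ?_, fun H hH hsat => ?_⟩
  · exact ((sUnionOrderIso hnt).le_iff_le (x := ⟨η₁, h₁⟩) (y := ⟨η₂, h₂⟩)).symm
  · exact (sUnionOrderIso hnt ⟨η, hη⟩).2
  · obtain ⟨⟨η, hη⟩, hηH, hunique⟩ := (sUnionOrderIso hnt).bijective.existsUnique ⟨H, hH, hsat⟩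
    exact ⟨η, ⟨hη, congrArg Subtype.val hηH⟩, fun ζ ⟨hζ, hζH⟩ =>
      congrArg Subtype.val (hunique ⟨ζ, hζ⟩ (Subtype.ext hζH))⟩

open DirGraph in
/-- Corollary `cor:structure-a`: if `G` has finitely many vertices and no
transition states, then every hereditary subset of `E⁰` is saturated and `η ↦ ∪η` is a
lattice (order) isomorphism from the hereditary subsets of `Γ_E` onto the saturated
hereditary subsets of `E⁰`. -/
theorem stmt2 (G : DirGraph) (hcE : Countable G.E) (hfin : Finite G.V)
    (hnt : ∀ v : G.V, ¬ G.TransitionState v) :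
    (∀ H : Set G.V, G.Hereditary H → G.Saturated H) ∧
    (∀ η₁ η₂ : Set (Set G.V), G.HeredComp η₁ → G.HeredComp η₂ →
      (η₁ ⊆ η₂ ↔ ⋃₀ η₁ ⊆ ⋃₀ η₂)) ∧
    (∀ η : Set (Set G.V), G.HeredComp η →
      G.Hereditary (⋃₀ η) ∧ G.Saturated (⋃₀ η)) ∧
    (∀ H : Set G.V, G.Hereditary H → G.Saturated H →
      ∃! η : Set (Set G.V), G.HeredComp η ∧ ⋃₀ η = H) :=
  stmt2_general G hnt
end

section
/- For every graph E with finitely many vertices there exists a graph F with finitely many vertices such that: every infinite emitter of F emits infinitely many edges to any vertex it emits any edge to; every transition state of F has exactly one outgoing edge; and E ∼_ME F. Moreover, F can be obtained from E by finitely many applications of Move (O). -/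
attribute [local instance] Classical.propDecidable

namespace DirGraph

/-- Isomorphism of graphs. -/
def GraphIso (G H : DirGraph) : Prop :=
  ∃ (fV : G.V ≃ H.V) (fE : G.E ≃ H.E),
    (∀ e : G.E, H.s (fE e) = fV (G.s e)) ∧ ∀ e : G.E, H.r (fE e) = fV (G.r e)

/-- Data for Move (S): a regular source. -/
structure MoveSData (G : DirGraph) where
  w : G.V
  regular : G.Regular w
  source : ∀ e : G.E, G.r e ≠ w

/-- The graph obtained by removing the regular source `w`. -/
def MoveSData.graph {G : DirGraph} (d : MoveSData G) : DirGraph where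
  V := {v : G.V // v ≠ d.w}
  E := {e : G.E // G.s e ≠ d.w}
  s := fun e => ⟨G.s e.1, e.2⟩
  r := fun e => ⟨G.r e.1, d.source e.1⟩

def IsMoveS (G H : DirGraph) : Prop := ∃ d : MoveSData G, GraphIso d.graph H

/-- Data for Move (R): a regular vertex `w` with `s⁻¹(w) = {f}`, `r(f) ≠ w`, and all
edges into `w` emitted by the single vertex `x`. -/
structure MoveRData (G : DirGraph) where
  w : G.V
  f : G.E
  x : G.V
  hsf : ∀ e : G.E, G.s e = w ↔ e = f
  hrf : G.r f ≠ w
  hin : ∀ e : G.E, G.r e = w → G.s e = x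
  hne : ∃ e : G.E, G.r e = w

/-- The graph obtained by reducing at `w`: each edge `e` into `w` is replaced by an
edge from `x` to `r(f)`, and `w`, `f` are removed. -/
noncomputable def MoveRData.graph {G : DirGraph} (d : MoveRData G) : DirGraph where
  V := {v : G.V // v ≠ d.w}
  E := {e : G.E // e ≠ d.f}
  s := fun e => ⟨G.s e.1, fun hs => e.2 ((d.hsf e.1).mp hs)⟩
  r := fun e => if h : G.r e.1 = d.w then ⟨G.r d.f, d.hrf⟩ else ⟨G.r e.1, h⟩

def IsMoveR (G H : DirGraph) : Prop := ∃ d : MoveRData G, GraphIso d.graph H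

/-- Data for Move (O): a non-sink `w` and a partition of `s⁻¹(w)` into finitely many
nonempty sets, at most one of which is infinite. -/
structure MoveOData (G : DirGraph) where
  w : G.V
  notSink : ∃ e : G.E, G.s e = w
  nparts : ℕ
  P : {e : G.E // G.s e = w} → Fin nparts
  surj : Function.Surjective P
  oneInfinite : ∀ i j : Fin nparts,
    {e : {e : G.E // G.s e = w} | P e = i}.Infinite →
    {e : {e : G.E // G.s e = w} | P e = j}.Infinite → i = j

/-- The graph obtained from `G` by outsplitting at `w`. -/
noncomputable def MoveOData.graph {G : DirGraph} (d : MoveOData G) : DirGraph where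
  V := {v : G.V // v ≠ d.w} ⊕ Fin d.nparts
  E := {e : G.E // G.r e ≠ d.w} ⊕ ({e : G.E // G.r e = d.w} × Fin d.nparts)
  s := fun e =>
    match e with
    | .inl e => if h : G.s e.1 = d.w then .inr (d.P ⟨e.1, h⟩) else .inl ⟨G.s e.1, h⟩
    | .inr (e, _) => if h : G.s e.1 = d.w then .inr (d.P ⟨e.1, h⟩) else .inl ⟨G.s e.1, h⟩
  r := fun e =>
    match e with
    | .inl e => .inl ⟨G.r e.1, e.2⟩
    | .inr (_, i) => .inr i

def IsMoveO (G H : DirGraph) : Prop := ∃ d : MoveOData G, GraphIso d.graph H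

/-- Data for Move (I): a regular non-source `w` and a partition of `r⁻¹(w)` into
finitely many nonempty sets. -/
structure MoveIData (G : DirGraph) where
  w : G.V
  regular : G.Regular w
  notSource : ∃ e : G.E, G.r e = w
  nparts : ℕ
  P : {e : G.E // G.r e = w} → Fin nparts
  surj : Function.Surjective P

/-- The graph obtained from `G` by insplitting at `w`. -/
noncomputable def MoveIData.graph {G : DirGraph} (d : MoveIData G) : DirGraph where
  V := {v : G.V // v ≠ d.w} ⊕ Fin d.nparts
  E := {e : G.E // G.s e ≠ d.w} ⊕ ({e : G.E // G.s e = d.w} × Fin d.nparts)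
  s := fun e =>
    match e with
    | .inl e => .inl ⟨G.s e.1, e.2⟩
    | .inr (_, i) => .inr i
  r := fun e =>
    match e with
    | .inl e => if h : G.r e.1 = d.w then .inr (d.P ⟨e.1, h⟩) else .inl ⟨G.r e.1, h⟩
    | .inr (e, _) => if h : G.r e.1 = d.w then .inr (d.P ⟨e.1, h⟩) else .inl ⟨G.r e.1, h⟩

def IsMoveI (G H : DirGraph) : Prop := ∃ d : MoveIData G, GraphIso d.graph H

/-- Data for Move (C): a regular vertex supporting at least two distinct return paths. -/
structure MoveCData (G : DirGraph) where
  v : G.V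
  regular : G.Regular v
  twoRet : G.TwoReturnPaths v

/-- The graph obtained from `G` by Cuntz splicing at `v`: two new vertices `u₁, u₂`
and six new edges `v→u₁, u₁→v, u₁→u₁, u₁→u₂, u₂→u₁, u₂→u₂`. -/
def MoveCData.graph {G : DirGraph} (d : MoveCData G) : DirGraph where
  V := G.V ⊕ Fin 2
  E := G.E ⊕ Fin 6
  s := Sum.elim (fun e => Sum.inl (G.s e))
    (![Sum.inl d.v, Sum.inr 0, Sum.inr 0, Sum.inr 0, Sum.inr 1, Sum.inr 1])
  r := Sum.elim (fun e => Sum.inl (G.r e))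
    (![Sum.inr 0, Sum.inl d.v, Sum.inr 0, Sum.inr 1, Sum.inr 0, Sum.inr 1])

def IsMoveC (G H : DirGraph) : Prop := ∃ d : MoveCData G, GraphIso d.graph H

/-- An elementary step of move equivalence: graph isomorphism or one of the moves
(O), (I), (R), (S). -/
def ElemME (G H : DirGraph) : Prop :=
  GraphIso G H ∨ IsMoveO G H ∨ IsMoveI G H ∨ IsMoveR G H ∨ IsMoveS G H

/-- Move equivalence `∼_ME`: the equivalence relation generated by graph isomorphism
and moves (O), (I), (R), (S). -/
def MoveEquiv : DirGraph → DirGraph → Prop := Relation.EqvGen ElemME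

/-- An elementary step of Cuntz move equivalence. -/
def ElemCE (G H : DirGraph) : Prop := ElemME G H ∨ IsMoveC G H

/-- Cuntz move equivalence `∼_CE`: the equivalence relation generated by graph
isomorphism and moves (O), (I), (R), (S), (C). -/
def CuntzMoveEquiv : DirGraph → DirGraph → Prop := Relation.EqvGen ElemCE

/-- The plugged graph `E∧`: a loop is added at every sink. -/
def plug (G : DirGraph) : DirGraph where
  V := G.V
  E := G.E ⊕ {v : G.V // ∀ e : G.E, G.s e ≠ v}
  s := Sum.elim G.s Subtype.val
  r := Sum.elim G.r Subtype.val

end DirGraph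

/-!
An outsplit of `G` at `w` projects onto `G`. Its edges over `f` correspond, through their ranges,
to its vertices over `G.r f`, and all of them have the same source, which lies over `G.s f`.
Hence away from `w` infinite emitters, edge multiplicities and cycles are inherited.

An infinite emitter is repaired by splitting its edges of finite multiplicity from those of
infinite multiplicity: with finitely many vertices the former are finite in number, and they are
emitted by a finite emitter afterwards. A transition state with several edges is repaired by
splitting all its edges. This multiplies the edges entering it, which may spoil transition states
upstream. But if no such state lies downstream, then the new vertices lead to none either, and the
number of transition states from which one can be reached decreases.
-/

theorem exists_reflTransGen_of_exists_lt {α β : Type*} [LT β] [WellFoundedLT β]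
    {r : α → α → Prop} {p q : α → Prop} (μ : α → β)
    (h : ∀ a, p a → ¬ q a → ∃ b, r a b ∧ p b ∧ μ b < μ a) (a : α) (ha : p a) :
    ∃ b, p b ∧ q b ∧ Relation.ReflTransGen r a b := by
  induction hn : μ a using WellFoundedLT.induction generalizing a with
  | ind n ih =>
    by_cases hq : q a
    · exact ⟨a, ha, hq, .refl⟩
    obtain ⟨b, hab, hb, hlt⟩ := h a ha hq
    obtain ⟨c, hc, hqc, hbc⟩ := ih (μ b) (hn ▸ hlt) b hb rfl
    exact ⟨c, hc, hqc, .head hab hbc⟩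

theorem exists_mem_forall_transGen_notMem {α : Type*} {r : α → α → Prop} {S : Set α}
    (hfin : S.Finite) (hne : S.Nonempty) (hacyc : ∀ a ∈ S, ¬ Relation.TransGen r a a) :
    ∃ a ∈ S, ∀ b, Relation.TransGen r a b → b ∉ S := by
  have := hfin.to_subtype
  have := hne.to_subtype
  let R : S → S → Prop := fun a b => Relation.TransGen r b a
  have : IsTrans S R := ⟨fun _ _ _ hab hbc => hbc.trans hab⟩
  have : Std.Irrefl R := ⟨fun a => hacyc a a.2⟩
  obtain ⟨a, -, ha⟩ :=
    (Finite.wellFounded_of_trans_of_irrefl R).has_min Set.univ Set.univ_nonempty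
  exact ⟨a, a.2, fun b hab hb => ha ⟨b, hb⟩ trivial hab⟩

namespace DirGraph

variable {G : DirGraph}

theorem GraphIso.refl (G : DirGraph) : GraphIso G G :=
  ⟨Equiv.refl _, Equiv.refl _, fun _ => rfl, fun _ => rfl⟩

theorem moveEquiv_of_reflTransGen_isMoveO {H : DirGraph}
    (h : Relation.ReflTransGen IsMoveO G H) : MoveEquiv G H :=
  have hle : IsMoveO ≤ ElemME := fun _ _ hO => Or.inr (Or.inl hO)
  Relation.EqvGen.mono hle _ _ (Relation.EqvGen.reflTransGen_le_eqvGen _ _ _ h)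

namespace MoveOData

/-! ### The projection of an outsplit graph -/

section Projection

variable (d : MoveOData G)

theorem isMoveO_graph : IsMoveO G d.graph := ⟨d, GraphIso.refl _⟩

instance [Finite G.V] : Finite d.graph.V :=
  inferInstanceAs (Finite ({v : G.V // v ≠ d.w} ⊕ Fin d.nparts))

/-- The projection on vertices from the outsplit graph, which identifies the copies of the split
vertex. -/
def vertexProj : d.graph.V → G.V := Sum.elim Subtype.val fun _ => d.w

/-- The projection on edges from the outsplit graph, which identifies the copies of an edge into
the split vertex. -/
def edgeProj : d.graph.E → G.E := Sum.elim Subtype.val fun p => p.1.1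

/-- The common source in the outsplit graph of the copies of an edge of `G`. -/
noncomputable def liftSource (f : G.E) : d.graph.V :=
  if h : G.s f = d.w then .inr (d.P ⟨f, h⟩) else .inl ⟨G.s f, h⟩

variable {d}

theorem liftSource_of_eq {f : G.E} (h : G.s f = d.w) :
    d.liftSource f = .inr (d.P ⟨f, h⟩) := dif_pos h

theorem liftSource_of_ne {f : G.E} (h : G.s f ≠ d.w) :
    d.liftSource f = .inl ⟨G.s f, h⟩ := dif_neg h

theorem liftSource_eq_liftSource_iff {e f : G.E} (he : G.s e = d.w) (hf : G.s f = d.w) :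
    d.liftSource e = d.liftSource f ↔ d.P ⟨e, he⟩ = d.P ⟨f, hf⟩ := by
  rw [liftSource_of_eq he, liftSource_of_eq hf]
  exact Sum.inr_injective.eq_iff

theorem graph_s (e : d.graph.E) : d.graph.s e = d.liftSource (d.edgeProj e) := by
  rcases e with e | ⟨e, i⟩ <;> rfl

theorem vertexProj_liftSource (f : G.E) : d.vertexProj (d.liftSource f) = G.s f := by
  by_cases h : G.s f = d.w
  · rw [liftSource_of_eq h]
    exact h.symm
  · rw [liftSource_of_ne h]
    rfl

theorem vertexProj_s (e : d.graph.E) : d.vertexProj (d.graph.s e) = G.s (d.edgeProj e) := by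
  rw [graph_s, vertexProj_liftSource]

theorem vertexProj_r (e : d.graph.E) : d.vertexProj (d.graph.r e) = G.r (d.edgeProj e) := by
  rcases e with e | ⟨e, _⟩
  · rfl
  · exact e.2.symm

theorem eq_of_vertexProj_eq {x y : d.graph.V} (hx : d.vertexProj x ≠ d.w)
    (h : d.vertexProj x = d.vertexProj y) : x = y := by
  rcases x with x | i
  · rcases y with y | j
    · exact congrArg Sum.inl (Subtype.ext h)
    · exact absurd h hx
  · exact absurd rfl hx

theorem exists_liftSource_eq {x : d.graph.V} (hx : d.vertexProj x = d.w) :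
    ∃ f, d.liftSource f = x := by
  rcases x with x | i
  · exact absurd hx x.2
  · obtain ⟨⟨f, hf⟩, rfl⟩ := d.surj i
    exact ⟨f, liftSource_of_eq hf⟩

theorem vertexProj_surjective : Function.Surjective d.vertexProj := by
  intro v
  by_cases h : v = d.w
  · obtain ⟨f, hf⟩ := d.notSink
    exact ⟨d.liftSource f, by rw [vertexProj_liftSource, hf, h]⟩
  · exact ⟨.inl ⟨v, h⟩, rfl⟩

theorem liftSource_eq_iff {x : d.graph.V} (hx : d.vertexProj x ≠ d.w) {f : G.E} :
    d.liftSource f = x ↔ G.s f = d.vertexProj x := by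
  rw [← vertexProj_liftSource (d := d)]
  exact ⟨congrArg d.vertexProj, fun h => (eq_of_vertexProj_eq hx h.symm).symm⟩

theorem exists_edge_over {f : G.E} {y : d.graph.V} (h : d.vertexProj y = G.r f) :
    ∃ e : d.graph.E, d.edgeProj e = f ∧ d.graph.r e = y := by
  rcases y with y | i
  · exact ⟨.inl ⟨f, fun hf => y.2 (h.trans hf)⟩, rfl, congrArg Sum.inl (Subtype.ext h.symm)⟩
  · exact ⟨.inr (⟨f, h.symm⟩, i), rfl, rfl⟩

theorem edge_ext {e e' : d.graph.E} (hf : d.edgeProj e = d.edgeProj e')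
    (hr : d.graph.r e = d.graph.r e') : e = e' := by
  rcases e with e | ⟨e, i⟩ <;> rcases e' with e' | ⟨e', i'⟩
  · exact congrArg Sum.inl (Subtype.ext hf)
  · cases hr
  · cases hr
  · cases hr
    exact congrArg (fun t => Sum.inr (t, i)) (Subtype.ext hf)

theorem edgeProj_surjective : Function.Surjective d.edgeProj := fun f =>
  have ⟨_, hy⟩ := d.vertexProj_surjective (G.r f)
  have ⟨e, he, _⟩ := exists_edge_over hy
  ⟨e, he⟩

theorem step_vertexProj {x y : d.graph.V} (h : d.graph.Step x y) :
    G.Step (d.vertexProj x) (d.vertexProj y) := by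
  obtain ⟨e, rfl, rfl⟩ := h
  exact ⟨d.edgeProj e, (vertexProj_s e).symm, (vertexProj_r e).symm⟩

theorem reach_vertexProj {x y : d.graph.V} (h : d.graph.Reach x y) :
    G.Reach (d.vertexProj x) (d.vertexProj y) :=
  Relation.ReflTransGen.lift d.vertexProj (fun _ _ => step_vertexProj) _ _ h

theorem exists_step_over {u : G.V} {y : d.graph.V} (h : G.Step u (d.vertexProj y)) :
    ∃ x, d.vertexProj x = u ∧ d.graph.Step x y := by
  obtain ⟨f, rfl, hf⟩ := h
  obtain ⟨e, rfl, rfl⟩ := exists_edge_over hf.symm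
  exact ⟨d.graph.s e, vertexProj_s e, e, rfl, rfl⟩

theorem exists_transGen_over {u : G.V} {y : d.graph.V}
    (h : Relation.TransGen G.Step u (d.vertexProj y)) :
    ∃ x, d.vertexProj x = u ∧ Relation.TransGen d.graph.Step x y := by
  induction h using Relation.TransGen.head_induction_on with
  | single h =>
    obtain ⟨x, hx, hxy⟩ := exists_step_over h
    exact ⟨x, hx, .single hxy⟩
  | head h _ ih =>
    obtain ⟨z, rfl, hzy⟩ := ih
    obtain ⟨x, hx, hxz⟩ := exists_step_over h
    exact ⟨x, hx, .head hxz hzy⟩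

theorem supportsCycle_of_vertexProj {x : d.graph.V} (hx : d.vertexProj x ≠ d.w)
    (h : G.SupportsCycle (d.vertexProj x)) : d.graph.SupportsCycle x := by
  obtain ⟨z, hz, hzx⟩ := exists_transGen_over h
  rwa [← eq_of_vertexProj_eq hx hz.symm] at hzx

theorem ncard_lt {S : Set G.V} {T : Set d.graph.V} (hS : S.Finite) (hw : d.w ∈ S)
    (hT : ∀ x ∈ T, d.vertexProj x ≠ d.w ∧ d.vertexProj x ∈ S) : T.ncard < S.ncard := by
  have hinj : Set.InjOn d.vertexProj T := fun x hx y _ h => eq_of_vertexProj_eq (hT x hx).1 h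
  rw [← hinj.ncard_image]
  refine Set.ncard_lt_ncard (Set.ssubset_iff_of_subset ?_ |>.2 ⟨d.w, hw, ?_⟩) hS
  · rintro _ ⟨x, hx, rfl⟩
    exact (hT x hx).2
  · rintro ⟨x, hx, hxw⟩
    exact (hT x hx).1 hxw

end Projection

/-! ### Edges emitted in an outsplit graph -/

section Emission

variable {d : MoveOData G}

theorem finite_edgeProj_fiber [Finite G.V] (f : G.E) : (d.edgeProj ⁻¹' {f}).Finite :=
  .of_finite_image (Set.toFinite (d.graph.r '' _)) fun _ he _ he' hr =>
    edge_ext (he.trans he'.symm) hr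

theorem setOf_s_eq (x : d.graph.V) :
    {e | d.graph.s e = x} = d.edgeProj ⁻¹' {f | d.liftSource f = x} :=
  Set.ext fun e => by simp only [Set.mem_ofPred_eq, Set.mem_preimage, graph_s]

theorem infinite_liftSource [Finite G.V] {x : d.graph.V} (h : d.graph.InfiniteEmitter x) :
    {f | d.liftSource f = x}.Infinite := fun hfin =>
  h (setOf_s_eq x ▸ hfin.preimage' fun f _ => finite_edgeProj_fiber f)

theorem infiniteEmitter_vertexProj [Finite G.V] {x : d.graph.V}
    (h : d.graph.InfiniteEmitter x) : G.InfiniteEmitter (d.vertexProj x) :=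
  (infinite_liftSource h).mono fun f hf =>
    (vertexProj_liftSource f).symm.trans (congrArg d.vertexProj hf)

theorem regular_vertexProj {x : d.graph.V} (hx : d.vertexProj x ≠ d.w)
    (h : d.graph.Regular x) : G.Regular (d.vertexProj x) := by
  have hfiber : {f | d.liftSource f = x} = {f | G.s f = d.vertexProj x} :=
    Set.ext fun _ => liftSource_eq_iff hx
  rw [Regular, setOf_s_eq, hfiber] at h
  exact ⟨h.1.of_preimage edgeProj_surjective, Set.nonempty_of_nonempty_preimage h.2⟩

theorem transitionState_vertexProj {x : d.graph.V} (hx : d.vertexProj x ≠ d.w)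
    (h : d.graph.TransitionState x) : G.TransitionState (d.vertexProj x) :=
  ⟨regular_vertexProj hx h.1, fun hc => h.2 (supportsCycle_of_vertexProj hx hc)⟩

theorem existsUnique_edge {x : d.graph.V} {f : G.E} (hf : ∀ g, d.liftSource g = x ↔ g = f)
    (hr : G.r f ≠ d.w) : ∃! e, d.graph.s e = x := by
  obtain ⟨e, rfl⟩ := d.edgeProj_surjective f
  refine ⟨e, (graph_s e).trans ((hf _).2 rfl), fun e' he' => ?_⟩
  have hproj : d.edgeProj e' = d.edgeProj e := (hf _).1 ((graph_s e').symm.trans he')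
  refine edge_ext hproj (eq_of_vertexProj_eq ?_ ?_)
  · rwa [vertexProj_r, hproj]
  · rw [vertexProj_r, vertexProj_r, hproj]

theorem existsUnique_edge_of_vertexProj {x : d.graph.V} (hx : d.vertexProj x ≠ d.w)
    (h : ∃! f, G.s f = d.vertexProj x) (hstep : ¬ G.Step (d.vertexProj x) d.w) :
    ∃! e, d.graph.s e = x := by
  obtain ⟨f, hf, huniq⟩ := h
  refine existsUnique_edge (f := f) (fun g => ?_) fun hr => hstep ⟨f, hf, hr⟩
  rw [liftSource_eq_iff hx]
  exact ⟨huniq g, fun hg => hg ▸ hf⟩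

end Emission

/-! ### Outsplits along a colouring of the edges -/

section Coloring

variable {α : Type*} (c : G.E → α) (a : α) {w : G.V}

theorem finite_image_of_finite_ne (hc : {e | G.s e = w ∧ c e ≠ a}.Finite) :
    (c '' {e | G.s e = w}).Finite := by
  refine ((hc.image c).insert a).subset ?_
  rintro _ ⟨e, he, rfl⟩
  exact or_iff_not_imp_left.2 fun hne => ⟨e, ⟨he, hne⟩, rfl⟩

variable (hw : ∃ e, G.s e = w) (hc : {e | G.s e = w ∧ c e ≠ a}.Finite)

/-- A numbering of the values of `c` on the edges emitted by `w`, which indexes the parts of the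
partition in `ofColoring`. -/
noncomputable def colorIndex :
    c '' {e | G.s e = w} ≃ Fin (Nat.card (c '' {e | G.s e = w})) :=
  have := (finite_image_of_finite_ne c a hc).to_subtype
  Finite.equivFin _

/-- The outsplit at `w` for the partition of the edges emitted by `w` according to their value
under `c`. The value `a` is the only one which may be taken infinitely often. -/
noncomputable def ofColoring : MoveOData G where
  w := w
  notSink := hw
  nparts := Nat.card (c '' {e | G.s e = w})
  P e := colorIndex c a hc ⟨c e, e, e.2, rfl⟩
  surj := by
    refine (colorIndex c a hc).surjective.comp ?_
    rintro ⟨_, e, he, rfl⟩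
    exact ⟨⟨e, he⟩, rfl⟩
  oneInfinite := by
    have eq_colorIndex (i)
        (hi : {e : {e // G.s e = w} | colorIndex c a hc ⟨c e, e, e.2, rfl⟩ = i}.Infinite) :
        ∃ ha, i = colorIndex c a hc ⟨a, ha⟩ := by
      contrapose! hi
      refine (hc.preimage Subtype.val_injective.injOn).subset ?_
      rintro e rfl
      refine ⟨e.2, ?_⟩
      rintro rfl
      exact hi _ rfl
    intro i j hi hj
    obtain ⟨_, rfl⟩ := eq_colorIndex i hi
    obtain ⟨_, rfl⟩ := eq_colorIndex j hj
    rfl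

theorem liftSource_ofColoring_eq_iff {e f : G.E} :
    (ofColoring c a hw hc).liftSource e = (ofColoring c a hw hc).liftSource f ↔
      G.s e = G.s f ∧ (G.s e = w → c e = c f) := by
  by_cases he : G.s e = w
  · by_cases hf : G.s f = w
    · have hcolor : (ofColoring c a hw hc).P ⟨e, he⟩ = (ofColoring c a hw hc).P ⟨f, hf⟩ ↔
          c e = c f := (colorIndex c a hc).injective.eq_iff.trans Subtype.mk_eq_mk
      rw [liftSource_eq_liftSource_iff he hf, hcolor, he, hf]
      exact ⟨fun h => ⟨rfl, fun _ => h⟩, fun h => h.2 rfl⟩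
    · rw [liftSource_eq_iff (by rwa [vertexProj_liftSource]), vertexProj_liftSource, he]
      exact ⟨fun h => absurd h.symm hf, And.left⟩
  · rw [eq_comm, liftSource_eq_iff (by rwa [vertexProj_liftSource]), vertexProj_liftSource,
      eq_comm]
    exact ⟨fun h => ⟨h, fun h' => absurd h' he⟩, And.left⟩

end Coloring

end MoveOData

/-! ### Infinite emitters -/

/-- An edge has infinite multiplicity if it has infinitely many parallel edges. -/
def InfiniteMultiplicity (G : DirGraph) (e : G.E) : Prop :=
  {f | G.s f = G.s e ∧ G.r f = G.r e}.Infinite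

/-- A vertex is a uniform emitter if it is not an infinite emitter or emits only edges of infinite
multiplicity, so that an infinite emitter emits infinitely many edges to any vertex it emits any
edge to. -/
def UniformEmitter (G : DirGraph) (v : G.V) : Prop :=
  G.InfiniteEmitter v → ∀ e, G.s e = v → G.InfiniteMultiplicity e

theorem infiniteMultiplicity_congr {e f : G.E} (hs : G.s e = G.s f) (hr : G.r e = G.r f) :
    G.InfiniteMultiplicity e ↔ G.InfiniteMultiplicity f := by
  rw [InfiniteMultiplicity, InfiniteMultiplicity, hs, hr]

theorem finite_not_infiniteMultiplicity [Finite G.V] (v : G.V) :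
    {e | G.s e = v ∧ ¬ G.InfiniteMultiplicity e}.Finite := by
  refine .of_finite_fibers G.r (Set.toFinite _) ?_
  rintro _ ⟨e, ⟨rfl, he⟩, rfl⟩
  exact (Set.not_infinite.1 he).subset fun f hf => ⟨hf.1.1, hf.2⟩

namespace MoveOData

theorem infiniteMultiplicity_of_edgeProj {d : MoveOData G} {e : d.graph.E}
    (h : G.InfiniteMultiplicity (d.edgeProj e))
    (hpar : ∀ f, G.s f = G.s (d.edgeProj e) → G.r f = G.r (d.edgeProj e) →
      d.liftSource f = d.liftSource (d.edgeProj e)) :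
    d.graph.InfiniteMultiplicity e := by
  refine Set.Infinite.of_image d.edgeProj (h.mono ?_)
  rintro f ⟨hs, hr⟩
  obtain ⟨e', rfl, he'⟩ := exists_edge_over ((vertexProj_r e).trans hr.symm)
  exact ⟨e', ⟨by rw [graph_s, graph_s, hpar _ hs hr], he'⟩, rfl⟩

theorem uniformEmitter_of_vertexProj [Finite G.V] {d : MoveOData G} {x : d.graph.V}
    (hx : d.vertexProj x ≠ d.w) (h : G.UniformEmitter (d.vertexProj x)) :
    d.graph.UniformEmitter x := by
  rintro hinf e rfl
  refine infiniteMultiplicity_of_edgeProj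
    (h (infiniteEmitter_vertexProj hinf) _ (vertexProj_s e).symm) fun f hs _ => ?_
  rwa [← graph_s, liftSource_eq_iff hx, vertexProj_s]

/-- The outsplit at an infinite emitter which separates its edges of infinite multiplicity from
its other edges. -/
noncomputable def ofInfiniteEmitter [Finite G.V] {w : G.V} (hw : G.InfiniteEmitter w) :
    MoveOData G :=
  ofColoring G.InfiniteMultiplicity True hw.nonempty <| by
    simpa only [ne_eq, eq_iff_iff, iff_true] using finite_not_infiniteMultiplicity w

theorem uniformEmitter_ofInfiniteEmitter [Finite G.V] {w : G.V} (hw : G.InfiniteEmitter w)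
    {x : (ofInfiniteEmitter hw).graph.V} (hx : (ofInfiniteEmitter hw).vertexProj x = w) :
    (ofInfiniteEmitter hw).graph.UniformEmitter x := by
  rintro hinf e rfl
  have hsource {f g : G.E} :
      (ofInfiniteEmitter hw).liftSource f = (ofInfiniteEmitter hw).liftSource g ↔
        G.s f = G.s g ∧ (G.s f = w → G.InfiniteMultiplicity f = G.InfiniteMultiplicity g) :=
    liftSource_ofColoring_eq_iff ..
  have hmult : G.InfiniteMultiplicity ((ofInfiniteEmitter hw).edgeProj e) := by
    by_contra he
    refine infinite_liftSource hinf ((finite_not_infiniteMultiplicity w).subset fun f hf => ?_)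
    obtain ⟨hs, hmult⟩ := hsource.1 (hf.trans (graph_s e))
    have hfw : G.s f = w := by rw [hs, ← vertexProj_s, hx]
    exact ⟨hfw, hmult hfw ▸ he⟩
  exact infiniteMultiplicity_of_edgeProj hmult fun f hs hr =>
    hsource.2 ⟨hs, fun _ => propext (infiniteMultiplicity_congr hs hr)⟩

end MoveOData

theorem exists_reflTransGen_isMoveO_uniformEmitter (G : DirGraph) [Finite G.V] :
    ∃ F : DirGraph, Finite F.V ∧ (∀ v, F.UniformEmitter v) ∧
      Relation.ReflTransGen IsMoveO G F := by
  refine exists_reflTransGen_of_exists_lt (p := fun H => Finite H.V)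
    (fun H => {v | ¬ H.UniformEmitter v}.ncard) (fun H _ hH => ?_) G ‹_›
  obtain ⟨w, hw⟩ := not_forall.1 hH
  have hinf : H.InfiniteEmitter w := (Classical.not_imp.1 hw).1
  let d := MoveOData.ofInfiniteEmitter hinf
  refine ⟨d.graph, d.isMoveO_graph, inferInstance, d.ncard_lt (Set.toFinite _) hw fun x hx => ?_⟩
  have hxw : d.vertexProj x ≠ d.w := fun h =>
    hx (MoveOData.uniformEmitter_ofInfiniteEmitter hinf h)
  exact ⟨hxw, fun h => hx (MoveOData.uniformEmitter_of_vertexProj hxw h)⟩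

/-! ### Transition states -/

/-- A branching state is a transition state which does not emit exactly one edge: these are the
vertices to be removed by outsplits. -/
def BranchingState (G : DirGraph) (v : G.V) : Prop :=
  G.TransitionState v ∧ ¬ ∃! e, G.s e = v

/-- The set of transition states from which a branching state can be reached. -/
def preBranching (G : DirGraph) : Set G.V :=
  {v | G.TransitionState v ∧ ∃ u, G.Reach v u ∧ G.BranchingState u}

namespace MoveOData

/-- The outsplit at a regular vertex into vertices emitting (the copies of) one edge each. -/
noncomputable def ofRegular {w : G.V} (hw : G.Regular w) : MoveOData G :=
  ofColoring id hw.2.some hw.2 (hw.1.subset fun _ => And.left)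

theorem existsUnique_edge_ofRegular {w : G.V} (hw : G.Regular w) (hcyc : ¬ G.SupportsCycle w)
    {x : (ofRegular hw).graph.V} (hx : (ofRegular hw).vertexProj x = w) :
    ∃! e, (ofRegular hw).graph.s e = x := by
  obtain ⟨f, rfl⟩ := exists_liftSource_eq hx
  rw [vertexProj_liftSource] at hx
  refine existsUnique_edge (f := f) (fun g => ?_) fun hr => hcyc (.single ⟨f, hx, hr⟩)
  refine (liftSource_ofColoring_eq_iff ..).trans ⟨fun h => h.2 (h.1.trans hx), ?_⟩
  rintro rfl
  exact ⟨rfl, fun _ => rfl⟩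

theorem uniformEmitter_ofRegular [Finite G.V] {w : G.V} (hw : G.Regular w)
    (h : ∀ v, G.UniformEmitter v) (x : (ofRegular hw).graph.V) :
    (ofRegular hw).graph.UniformEmitter x := by
  by_cases hx : (ofRegular hw).vertexProj x = w
  · exact fun hinf => absurd hw.1 (hx ▸ infiniteEmitter_vertexProj hinf)
  · exact uniformEmitter_of_vertexProj hx (h _)

theorem branchingState_or_step_of_branchingState {d : MoveOData G} {y : d.graph.V}
    (hyw : d.vertexProj y ≠ d.w) (hy : d.graph.BranchingState y) :
    G.BranchingState (d.vertexProj y) ∨ G.Step (d.vertexProj y) d.w := by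
  by_contra! h
  have huniq : ∃! f, G.s f = d.vertexProj y :=
    by_contra fun hne => h.1 ⟨transitionState_vertexProj hyw hy.1, hne⟩
  exact hy.2 (existsUnique_edge_of_vertexProj hyw huniq h.2)

theorem ncard_preBranching_ofRegular_lt [Finite G.V] {w : G.V} (hw : G.BranchingState w)
    (hlast : ∀ v, Relation.TransGen G.Step w v → ¬ G.BranchingState v) :
    (ofRegular hw.1.1).graph.preBranching.ncard < G.preBranching.ncard := by
  refine ncard_lt (Set.toFinite _) ⟨hw.1, w, .refl, hw⟩ ?_
  rintro x ⟨hx, y, hxy, hy⟩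
  have hyw : (ofRegular hw.1.1).vertexProj y ≠ w := fun h =>
    hy.2 (existsUnique_edge_ofRegular hw.1.1 hw.1.2 h)
  have hreach : G.Reach ((ofRegular hw.1.1).vertexProj x) ((ofRegular hw.1.1).vertexProj y) :=
    reach_vertexProj hxy
  have hy' := branchingState_or_step_of_branchingState hyw hy
  have hxw : (ofRegular hw.1.1).vertexProj x ≠ w := by
    intro h
    rw [h] at hreach
    have hwy : Relation.TransGen G.Step w ((ofRegular hw.1.1).vertexProj y) :=
      (Relation.reflTransGen_iff_eq_or_transGen.1 hreach).resolve_left hyw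
    exact hy'.elim (hlast _ hwy) fun hstep => hw.1.2 (hwy.tail hstep)
  refine ⟨hxw, transitionState_vertexProj hxw hx, ?_⟩
  exact hy'.elim (fun hb => ⟨_, hreach, hb⟩) fun hstep => ⟨w, hreach.tail hstep, hw⟩

end MoveOData

theorem exists_reflTransGen_isMoveO_not_branchingState (G : DirGraph) [Finite G.V]
    (hG : ∀ v, G.UniformEmitter v) :
    ∃ F : DirGraph, (Finite F.V ∧ ∀ v, F.UniformEmitter v) ∧ (∀ v, ¬ F.BranchingState v) ∧
      Relation.ReflTransGen IsMoveO G F := by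
  refine exists_reflTransGen_of_exists_lt (p := fun H => Finite H.V ∧ ∀ v, H.UniformEmitter v)
    (fun H => H.preBranching.ncard) (fun H ⟨_, hH⟩ hbranch => ?_) G ⟨‹_›, hG⟩
  obtain ⟨w, hw, hlast⟩ := exists_mem_forall_transGen_notMem (r := H.Step)
    (Set.toFinite {v | H.BranchingState v}) (not_forall_not.1 hbranch) fun _ hv => hv.1.2
  exact ⟨_, MoveOData.isMoveO_graph _,
    ⟨inferInstance, MoveOData.uniformEmitter_ofRegular hw.1.1 hH⟩,
    MoveOData.ncard_preBranching_ofRegular_lt hw hlast⟩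

end DirGraph

open DirGraph in
theorem stmt6_general (E : DirGraph) (hfin : Finite E.V) :
    ∃ F : DirGraph, Finite F.V ∧
      (∀ v : F.V, F.InfiniteEmitter v → ∀ u : F.V,
        (∃ e : F.E, F.s e = v ∧ F.r e = u) → {e : F.E | F.s e = v ∧ F.r e = u}.Infinite) ∧
      (∀ v : F.V, F.TransitionState v → ∃! e : F.E, F.s e = v) ∧
      MoveEquiv E F ∧
      Relation.ReflTransGen IsMoveO E F := by
  obtain ⟨H, _, hH, hEH⟩ := exists_reflTransGen_isMoveO_uniformEmitter E
  obtain ⟨F, ⟨hF, huniform⟩, hbranch, hHF⟩ := exists_reflTransGen_isMoveO_not_branchingState H hH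
  have hEF := hEH.trans hHF
  refine ⟨F, hF, ?_, fun v hv => by_contra fun h => hbranch v ⟨hv, h⟩,
    moveEquiv_of_reflTransGen_isMoveO hEF, hEF⟩
  rintro v hv u ⟨e, rfl, rfl⟩
  exact huniform _ hv e rfl

open DirGraph in
/-- Lemma `lem:structure-2(iv)`: every graph with finitely many vertices
is move equivalent — in fact via finitely many applications of Move (O) — to a graph
with finitely many vertices in which every infinite emitter emits infinitely many edges
to any vertex it emits any edge to, and every transition state has exactly one outgoing
edge. -/
theorem stmt6 (E : DirGraph) (hcE : Countable E.E) (hfin : Finite E.V) :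
    ∃ F : DirGraph, Finite F.V ∧
      (∀ v : F.V, F.InfiniteEmitter v → ∀ u : F.V,
        (∃ e : F.E, F.s e = v ∧ F.r e = u) → {e : F.E | F.s e = v ∧ F.r e = u}.Infinite) ∧
      (∀ v : F.V, F.TransitionState v → ∃! e : F.E, F.s e = v) ∧
      MoveEquiv E F ∧
      Relation.ReflTransGen IsMoveO E F :=
  stmt6_general E hfin
end

section
/- Let E be a graph with finitely many vertices. Then E has no vertex supporting two distinct return paths if and only if τ_E(γ) ≤ 0 for every component γ ∈ Γ_E. -/
attribute [local instance] Classical.propDecidable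

/-!
Within a component `γ` supporting cycles, the source map sends `γ¹` onto `γ`, and two distinct
edges of `γ¹` with the same source `v` extend to two distinct return paths at `v`. So no vertex of
`γ` supports two return paths exactly when the source map is injective on `γ¹`, which for finite
`γ¹` means `|γ¹| ≤ |γ|`. When the source map is injective, a single return path visits every vertex
of `γ`, so `γ` and `γ¹` are finite even if `E⁰` is not.
-/

namespace DirGraph

variable (G : DirGraph)

/-- The set `γ¹` of edges of `G` with both ends in `γ`. -/
def internalEdges (γ : Set G.V) : Set G.E := {e | G.s e ∈ γ ∧ G.r e ∈ γ}

/-- The strongly connected component of `v`, which is the member of `Γ_E` containing `v` when `v`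
supports a cycle. Only nonempty paths count, so it is empty when `v` supports no cycle. -/
def scc (v : G.V) : Set G.V :=
  {u | Relation.TransGen G.Step v u ∧ Relation.TransGen G.Step u v}

/-- `p` is a nonempty path from `u` which reaches `v` for the first time at its last edge. The
starting vertex does not count as a visit, so the return paths at `v` are the first passages from
`v` to `v`; letting the starting vertex vary is what makes induction on `p` possible. -/
def IsFirstPassage (u v : G.V) (p : List G.E) : Prop :=
  G.IsPathFromTo u v p ∧ ∀ e ∈ p.dropLast, G.r e ≠ v

variable {G} {u v : G.V} {e f : G.E} {p q : List G.E} {γ : Set G.V}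

theorem isReturnPath_iff_isFirstPassage : G.IsReturnPath v p ↔ G.IsFirstPassage v v p := by
  simp only [IsReturnPath, IsFirstPassage, IsPathFromTo, ← exists_and_right, and_assoc]

theorem not_isFirstPassage_nil : ¬ G.IsFirstPassage u v [] := fun h => h.1.1 rfl

theorem isPathChain_singleton : G.IsPathChain [e] := List.isChain_singleton e

theorem isPathChain_cons_cons :
    G.IsPathChain (e :: f :: p) ↔ G.r e = G.s f ∧ G.IsPathChain (f :: p) :=
  List.isChain_cons_cons

theorem isFirstPassage_cons : G.IsFirstPassage u v (e :: p) ↔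
    G.s e = u ∧ (G.r e = v ∧ p = [] ∨ G.r e ≠ v ∧ G.IsFirstPassage (G.r e) v p) := by
  cases p with
  | nil => simp [IsFirstPassage, IsPathFromTo, isPathChain_singleton]
  | cons f p =>
    simp only [IsFirstPassage, IsPathFromTo, isPathChain_cons_cons, ne_eq, reduceCtorEq,
      not_false_eq_true, exists_true_left, List.head_cons, List.getLast_cons_cons,
      List.dropLast_cons_cons, List.forall_mem_cons, and_false, false_or]
    tauto

namespace IsFirstPassage

theorem transGen (hp : G.IsFirstPassage u v p) : Relation.TransGen G.Step u v := by
  induction p generalizing u with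
  | nil => exact absurd hp not_isFirstPassage_nil
  | cons e p ih =>
    obtain ⟨rfl, ⟨rfl, -⟩ | ⟨-, hp⟩⟩ := isFirstPassage_cons.1 hp
    · exact .single ⟨e, rfl, rfl⟩
    · exact .head ⟨e, rfl, rfl⟩ (ih hp)

theorem reach_of_mem (hp : G.IsFirstPassage u v p) (he : e ∈ p) :
    G.Reach u (G.s e) ∧ G.Reach (G.r e) v := by
  induction p generalizing u with
  | nil => exact absurd he List.not_mem_nil
  | cons f p ih =>
    obtain ⟨rfl, hf⟩ := isFirstPassage_cons.1 hp
    rcases List.mem_cons.1 he with rfl | he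
    · refine ⟨.refl, ?_⟩
      rcases hf with ⟨rfl, -⟩ | ⟨-, hp⟩
      exacts [.refl, hp.transGen.to_reflTransGen]
    · rcases hf with ⟨-, rfl⟩ | ⟨-, hp⟩
      · exact absurd he List.not_mem_nil
      · exact ⟨.head ⟨f, rfl, rfl⟩ (ih hp he).1, (ih hp he).2⟩

theorem exists_mem_source_eq (hp : G.IsFirstPassage u v p) : ∃ e ∈ p, G.s e = u := by
  obtain ⟨⟨hne, -, hs, -⟩, -⟩ := hp
  exact ⟨p.head hne, List.head_mem hne, hs⟩

theorem range_eq_or_exists_mem_source_eq (hp : G.IsFirstPassage u v p) (he : e ∈ p) :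
    G.r e = v ∨ ∃ f ∈ p, G.s f = G.r e := by
  induction p generalizing u with
  | nil => exact absurd he List.not_mem_nil
  | cons f p ih =>
    obtain ⟨-, ⟨hf, rfl⟩ | ⟨-, hp⟩⟩ := isFirstPassage_cons.1 hp
    · exact .inl (List.mem_singleton.1 he ▸ hf)
    · simp only [List.exists_mem_cons_iff]
      rcases List.mem_cons.1 he with rfl | he
      · exact .inr (.inr hp.exists_mem_source_eq)
      · exact (ih hp he).imp_right .inr

theorem eq_of_injOn_source {S : Set G.E} (hS : S.InjOn G.s) (hp : G.IsFirstPassage u v p)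
    (hq : G.IsFirstPassage u v q) (hpS : ∀ e ∈ p, e ∈ S) (hqS : ∀ e ∈ q, e ∈ S) : p = q := by
  induction p generalizing u q with
  | nil => exact absurd hp not_isFirstPassage_nil
  | cons e p ih =>
    cases q with
    | nil => exact absurd hq not_isFirstPassage_nil
    | cons f q =>
      obtain ⟨rfl, hp_tail⟩ := isFirstPassage_cons.1 hp
      obtain ⟨hfe, hq_tail⟩ := isFirstPassage_cons.1 hq
      rw [List.forall_mem_cons] at hpS hqS
      obtain rfl : f = e := hS hqS.1 hpS.1 hfe
      rcases hp_tail with ⟨hv, rfl⟩ | ⟨hv, hp⟩ <;> rcases hq_tail with ⟨hv', rfl⟩ | ⟨hv', hq⟩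
      · rfl
      · exact absurd hv hv'
      · exact absurd hv' hv
      · rw [ih hp hq hpS.2 hqS.2]

end IsFirstPassage

theorem exists_isFirstPassage_cons (h : G.Reach (G.r e) v) :
    ∃ p, G.IsFirstPassage (G.s e) v (e :: p) := by
  generalize hw : G.r e = w at h
  induction h using Relation.ReflTransGen.head_induction_on generalizing e with
  | refl => exact ⟨[], isFirstPassage_cons.2 ⟨rfl, .inl ⟨hw, rfl⟩⟩⟩
  | head hstep _ ih =>
    obtain rfl | hv := eq_or_ne (G.r e) v
    · exact ⟨[], isFirstPassage_cons.2 ⟨rfl, .inl ⟨rfl, rfl⟩⟩⟩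
    · obtain ⟨f, hf, hfr⟩ := hstep
      obtain ⟨p, hp⟩ := ih hfr
      exact ⟨f :: p, isFirstPassage_cons.2 ⟨rfl, .inr ⟨hv, hw ▸ hf ▸ hp⟩⟩⟩

theorem SupportsCycle.exists_isFirstPassage (hv : G.SupportsCycle v) :
    ∃ p, G.IsFirstPassage v v p := by
  obtain ⟨_, ⟨e, rfl, rfl⟩, h⟩ := Relation.TransGen.head'_iff.1 hv
  obtain ⟨p, hp⟩ := exists_isFirstPassage_cons h
  exact ⟨e :: p, hp⟩

theorem TwoReturnPaths.supportsCycle (h : G.TwoReturnPaths v) : G.SupportsCycle v := by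
  obtain ⟨p, -, hp, -⟩ := h
  exact (isReturnPath_iff_isFirstPassage.1 hp).transGen

theorem stronglyConn_scc (hv : G.SupportsCycle v) : G.StronglyConn (G.scc v) :=
  ⟨⟨v, hv, hv⟩, fun _ hu _ hw => hu.2.trans hw.1⟩

theorem StronglyConn.subset_scc (hγ : G.StronglyConn γ) (hv : v ∈ γ) : γ ⊆ G.scc v :=
  fun u hu => ⟨hγ.2 v hv u hu, hγ.2 u hu v hv⟩

theorem isComponent_scc (hv : G.SupportsCycle v) : G.IsComponent (G.scc v) :=
  .inl ⟨stronglyConn_scc hv, fun _ hδ hsub => (hδ.subset_scc (hsub ⟨hv, hv⟩)).antisymm hsub⟩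

theorem scc_eq_of_mem (hu : u ∈ G.scc v) : G.scc u = G.scc v :=
  Set.ext fun _ => ⟨fun hw => ⟨hu.1.trans hw.1, hw.2.trans hu.2⟩,
    fun hw => ⟨hu.2.trans hw.1, hw.2.trans hu.1⟩⟩

theorem IsComponent.eq_scc_or_eq_singleton (hγ : G.IsComponent γ) :
    (∃ v, γ = G.scc v) ∨ ∃ v, γ = {v} ∧ ¬ G.SupportsCycle v := by
  obtain ⟨hγ, hmax⟩ | ⟨v, rfl, -, hv⟩ := hγ
  · obtain ⟨v, hv⟩ := hγ.1
    have hscc : G.StronglyConn (G.scc v) := stronglyConn_scc (hγ.2 v hv v hv)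
    exact .inl ⟨v, (hmax _ hscc (hγ.subset_scc hv)).symm⟩
  · exact .inr ⟨v, rfl, hv⟩

theorem IsFirstPassage.mem_internalEdges_scc (hp : G.IsFirstPassage v v p) (he : e ∈ p) :
    e ∈ G.internalEdges (G.scc v) := by
  obtain ⟨hs, hr⟩ := hp.reach_of_mem he
  have hstep : G.Step (G.s e) (G.r e) := ⟨e, rfl, rfl⟩
  exact ⟨⟨hp.transGen.trans_left hs, .head' hstep hr⟩,
    .tail' hs hstep, .trans_right hr hp.transGen⟩

theorem injOn_source_internalEdges_scc_iff :
    (G.internalEdges (G.scc v)).InjOn G.s ↔ ∀ u ∈ G.scc v, ¬ G.TwoReturnPaths u := by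
  refine ⟨fun hinj u hu ⟨p, q, hp, hq, hne⟩ => hne ?_, fun h e he f hf hef => ?_⟩
  · rw [isReturnPath_iff_isFirstPassage] at hp hq
    rw [← scc_eq_of_mem hu] at hinj
    exact hp.eq_of_injOn_source hinj hq (fun _ => hp.mem_internalEdges_scc)
      (fun _ => hq.mem_internalEdges_scc)
  · by_contra hne
    have exists_return {g : G.E} (hg : g ∈ G.internalEdges (G.scc v)) :
        ∃ p, G.IsReturnPath (G.s g) (g :: p) := by
      simp only [isReturnPath_iff_isFirstPassage]
      exact exists_isFirstPassage_cons (hg.2.2.trans hg.1.1).to_reflTransGen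
    obtain ⟨p, hp⟩ := exists_return he
    obtain ⟨q, hq⟩ := exists_return hf
    exact h _ he.1 ⟨_, _, hp, hef ▸ hq, fun hpq => hne (List.cons.inj hpq).1⟩

theorem image_source_internalEdges_scc : G.s '' G.internalEdges (G.scc v) = G.scc v := by
  refine (Set.image_subset_iff.2 fun _ he => he.1).antisymm fun u hu => ?_
  obtain ⟨_, ⟨e, rfl, rfl⟩, hreach⟩ := Relation.TransGen.head'_iff.1 hu.2
  exact ⟨e, ⟨hu, hu.1.tail ⟨e, rfl, rfl⟩, .trans_right hreach (hu.1.trans hu.2)⟩, rfl⟩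

theorem IsFirstPassage.exists_mem_source_eq_of_mem_scc (hp : G.IsFirstPassage v v p)
    (hinj : (G.internalEdges (G.scc v)).InjOn G.s) (hu : u ∈ G.scc v) : ∃ e ∈ p, G.s e = u := by
  obtain ⟨hvu, huv⟩ := hu
  replace hvu : G.Reach v u := hvu.to_reflTransGen
  induction hvu with
  | refl => exact hp.exists_mem_source_eq
  | tail hvf hstep ih =>
    obtain ⟨f, rfl, rfl⟩ := hstep
    have hfv : Relation.TransGen G.Step (G.s f) v := .head ⟨f, rfl, rfl⟩ huv
    have hf : f ∈ G.internalEdges (G.scc v) :=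
      ⟨⟨hp.transGen.trans_left hvf, hfv⟩, .tail' hvf ⟨f, rfl, rfl⟩, huv⟩
    obtain ⟨e, he, hef⟩ := ih hfv
    obtain rfl : e = f := hinj (hp.mem_internalEdges_scc he) hf hef
    obtain hr | hnext := hp.range_eq_or_exists_mem_source_eq he
    exacts [hr ▸ hp.exists_mem_source_eq, hnext]

theorem finite_scc_of_injOn_source (hinj : (G.internalEdges (G.scc v)).InjOn G.s) :
    (G.scc v).Finite := by
  obtain hempty | ⟨u, hu⟩ := (G.scc v).eq_empty_or_nonempty
  · exact hempty ▸ Set.finite_empty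
  · have hv : G.SupportsCycle v := hu.1.trans hu.2
    obtain ⟨p, hp⟩ := hv.exists_isFirstPassage
    exact (p.finite_toSet.image G.s).subset fun w => hp.exists_mem_source_eq_of_mem_scc hinj

theorem temp_nonpos_iff : G.temp γ ≤ 0 ↔
    (G.internalEdges γ).Finite ∧ (G.internalEdges γ).ncard ≤ γ.ncard := by
  unfold temp
  split_ifs with h
  · exact iff_of_false (by decide) fun hfin => h hfin.1
  · rw [Int.sign_nonpos_iff, sub_nonpos, Nat.cast_le]
    exact (and_iff_right (Set.not_infinite.1 h)).symm

theorem temp_scc_nonpos_iff :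
    G.temp (G.scc v) ≤ 0 ↔ (G.internalEdges (G.scc v)).InjOn G.s := by
  rw [temp_nonpos_iff]
  refine ⟨fun ⟨hfin, hcard⟩ => ?_, fun hinj => ⟨?_, ?_⟩⟩
  · refine Set.injOn_of_ncard_image_eq ((Set.ncard_image_le hfin).antisymm ?_) hfin
    rwa [image_source_internalEdges_scc]
  · refine Set.Finite.of_finite_image ?_ hinj
    rw [image_source_internalEdges_scc]
    exact finite_scc_of_injOn_source hinj
  · rw [← hinj.ncard_image, image_source_internalEdges_scc]

theorem internalEdges_singleton_eq_empty (hv : ¬ G.SupportsCycle v) :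
    G.internalEdges {v} = ∅ :=
  Set.eq_empty_of_forall_notMem fun e he => hv (.single ⟨e, he.1, he.2⟩)

theorem temp_singleton_nonpos (hv : ¬ G.SupportsCycle v) : G.temp {v} ≤ 0 := by
  simp [temp_nonpos_iff, internalEdges_singleton_eq_empty hv]

theorem IsComponent.temp_nonpos_iff_forall_not_twoReturnPaths (hγ : G.IsComponent γ) :
    G.temp γ ≤ 0 ↔ ∀ v ∈ γ, ¬ G.TwoReturnPaths v := by
  obtain ⟨v, rfl⟩ | ⟨v, rfl, hv⟩ := hγ.eq_scc_or_eq_singleton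
  · exact temp_scc_nonpos_iff.trans injOn_source_internalEdges_scc_iff
  · refine iff_of_true (temp_singleton_nonpos hv) ?_
    rintro u rfl htwo
    exact hv htwo.supportsCycle

end DirGraph

open DirGraph in
theorem stmt8_general (G : DirGraph) :
    (∀ v : G.V, ¬ G.TwoReturnPaths v) ↔
      ∀ γ : Set G.V, G.IsComponent γ → G.temp γ ≤ 0 := by
  refine ⟨fun h γ hγ => ?_, fun h v htwo => ?_⟩
  · exact hγ.temp_nonpos_iff_forall_not_twoReturnPaths.2 fun v _ => h v
  · have hv : G.SupportsCycle v := htwo.supportsCycle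
    have hscc : G.IsComponent (G.scc v) := isComponent_scc hv
    exact hscc.temp_nonpos_iff_forall_not_twoReturnPaths.1 (h _ hscc) v ⟨hv, hv⟩ htwo

open DirGraph in
/-- Lemma `charKH(ii)`: a graph with finitely many vertices has no vertex
supporting two distinct return paths iff `τ_E(γ) ≤ 0` for every component `γ ∈ Γ_E`. -/
theorem stmt8 (G : DirGraph) (hcE : Countable G.E) (hfin : Finite G.V) :
    (∀ v : G.V, ¬ G.TwoReturnPaths v) ↔
      ∀ γ : Set G.V, G.IsComponent γ → G.temp γ ≤ 0 :=
  stmt8_general G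
end
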